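/- Let φ : Σ → Δ be a combinatorial morphism of finite posets, α ∈ Σ, and let μ, ν ∈ ↑φ(α) with μ ⋖ ν (ν covers μ). Then φ⁻¹(ν) ∩ ↑α is the disjoint union, over γ ∈ φ⁻¹(μ) ∩ ↑α, of the sets φ⁻¹(ν) ∩ {η : γ ⋖ η}. -/

import Mathlib

/-- The Alexandrov (up-set) topology on a preorder: open sets are the up-sets. -/
def upTop (P : Type*) [Preorder P] : TopologicalSpace P where
  IsOpen s := IsUpperSet s
  isOpen_univ := isUpperSet_univ
  isOpen_inter := fun _ _ hs ht => hs.inter ht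
  isOpen_sUnion := fun _ h => isUpperSet_sUnion h

/-- A combinatorial morphism of posets: an order-preserving map sending each
principal down-set `Iic α` order-isomorphically onto `Iic (φ α)`. -/
def Combinatorial {P Q : Type*} [PartialOrder P] [PartialOrder Q] (φ : P → Q) : Prop :=
  Monotone φ ∧ ∀ α : P, Set.BijOn φ (Set.Iic α) (Set.Iic (φ α)) ∧
    ∀ x ∈ Set.Iic α, ∀ y ∈ Set.Iic α, (x ≤ y ↔ φ x ≤ φ y)

/-- `m` is balanced on the up-set `V` with respect to `φ`. -/
def BalancedMap {P Q : Type*} [PartialOrder P] [PartialOrder Q]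
    (φ : P → Q) (V : Set P) (m : P → ℤ) : Prop :=
  ∀ α ∈ V, ∀ β : Q, φ α ⋖ β → m α = ∑ᶠ γ ∈ {γ : P | φ γ = β ∧ α ⋖ γ}, m γ

theorem Combinatorial.strictMono {P Q : Type*} [PartialOrder P] [PartialOrder Q] {φ : P → Q}
    (hφ : Combinatorial φ) : StrictMono φ := fun _ b hab =>
  (hφ.1 hab.le).lt_of_ne fun h =>
    hab.ne ((hφ.2 b).1.injOn hab.le (Set.mem_Iic.2 le_rfl) h)

theorem StrictMono.covBy_of_map_covBy {P Q : Type*} [Preorder P] [Preorder Q] {φ : P → Q}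
    (hφ : StrictMono φ) {a b : P} (hab : a < b) (h : φ a ⋖ φ b) : a ⋖ b :=
  ⟨hab, fun _ hac hcb => h.2 (hφ hac) (hφ hcb)⟩

/-- Partition of the fibre over `ν` inside `Ici α` according to covered lifts of `μ`. -/
theorem fibre_partition_of_cover {P Q : Type*}
    [PartialOrder P] [PartialOrder Q] [Fintype P] [Fintype Q]
    (φ : P → Q) (hφ : Combinatorial φ) (α : P) (μ ν : Q)
    (hμ : φ α ≤ μ) (hν : φ α ≤ ν) (hcov : μ ⋖ ν) :
    (φ ⁻¹' {ν} ∩ Set.Ici α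
        = ⋃ γ ∈ φ ⁻¹' {μ} ∩ Set.Ici α, (φ ⁻¹' {ν} ∩ {η : P | γ ⋖ η})) ∧
    ((φ ⁻¹' {μ} ∩ Set.Ici α).PairwiseDisjoint
        (fun γ => φ ⁻¹' {ν} ∩ {η : P | γ ⋖ η})) := by
  refine ⟨Set.ext fun η => ?_, ?_⟩
  · simp only [Set.mem_iUnion, Set.mem_inter_iff, Set.mem_preimage, Set.mem_singleton_iff,
      Set.mem_Ici, Set.mem_ofPred_eq, exists_prop]
    constructor
    · rintro ⟨rfl, hαη⟩
      obtain ⟨γ, hγη, rfl⟩ := (hφ.2 η).1.surjOn (Set.mem_Iic.2 hcov.le)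
      have hlt : γ < η := lt_of_le_of_ne hγη fun h => hcov.ne (congrArg φ h)
      exact ⟨γ, ⟨rfl, ((hφ.2 η).2 α hαη γ hγη).2 hμ⟩, rfl,
        hφ.strictMono.covBy_of_map_covBy hlt hcov⟩
    · rintro ⟨γ, ⟨-, hαγ⟩, hη, hγη⟩
      exact ⟨hη, hαγ.trans hγη.le⟩
  · rintro γ ⟨hγ, -⟩ γ' ⟨hγ', -⟩ hne
    refine Set.disjoint_left.2 ?_
    rintro η ⟨-, hγη⟩ ⟨-, hγη'⟩
    exact hne ((hφ.2 η).1.injOn hγη.le hγη'.le (hγ.trans hγ'.symm))
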